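/- arXiv:2403.06150 — 2 statements merged into one kernel-verified Lean document; each statement's English description precedes it below -/
import Mathlib

section
/- (Undercutting lemma.) In the Bertrand pricing game with incomplete information with n ≥ 2 firms, let p be a strategy profile and suppose there exist a firm i, a signal profile s, and a state ω with μ(s,ω) > 0 such that i ∈ W(s,ω), p_i(s_i) > 0, and p_i(s_i) is maximal among all prices p_k(s'_k) with k ∈ W(s',ω') for some (s',ω') of positive μ-probability. Then there exist a firm j ≠ i and η₀ > 0 such that for every η with 0 < η < η₀, firm j strictly increases its expected profit by changing its quote at signal s_j to p_i(s_i) − η while leaving its quotes at all other signals unchanged. In particular, p is not a Bayesian Nash equilibrium. -/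
open Classical

/-- The set of winning firms at signal profile `s` and WTP `ω`, under strategy profile `p`:
those firms quoting the minimal price, provided that price is at most the buyer's WTP. -/
noncomputable def winners {ι : Type*} [Fintype ι] [Nonempty ι] {S : ι → Type*}
    (p : ∀ i, S i → ℝ) (s : ∀ i, S i) (ω : ℝ) : Finset ι :=
  Finset.univ.filter fun j =>
    p j (s j) = Finset.univ.inf' Finset.univ_nonempty (fun k => p k (s k)) ∧ p j (s j) ≤ ω

/-- Realized profit of firm `i`: its price divided by the number of winners if it wins,
and `0` otherwise. -/
noncomputable def realizedProfit {ι : Type*} [Fintype ι] [Nonempty ι] {S : ι → Type*}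
    (p : ∀ i, S i → ℝ) (s : ∀ i, S i) (ω : ℝ) (i : ι) : ℝ :=
  if i ∈ winners p s ω then p i (s i) / (winners p s ω).card else 0

/-- Expected profit of firm `i` under the joint distribution `μ` on signal profiles and WTPs. -/
noncomputable def expProfit {ι : Type*} [Fintype ι] [Nonempty ι] [DecidableEq ι]
    {S : ι → Type*} [∀ i, Fintype (S i)] (μ : (∀ i, S i) → ℝ → ℝ) (Ω : Finset ℝ)
    (p : ∀ i, S i → ℝ) (i : ι) : ℝ :=
  ∑ s : ∀ i, S i, ∑ ω ∈ Ω, μ s ω * realizedProfit p s ω i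

/-- Bayesian Nash equilibrium: no firm can strictly increase its expected profit by a
unilateral change of its own strategy. -/
def isBNE {ι : Type*} [Fintype ι] [Nonempty ι] [DecidableEq ι] {S : ι → Type*}
    [∀ i, Fintype (S i)] (μ : (∀ i, S i) → ℝ → ℝ) (Ω : Finset ℝ)
    (p : ∀ i, S i → ℝ) : Prop :=
  ∀ i : ι, ∀ q : S i → ℝ, expProfit μ Ω (Function.update p i q) i ≤ expProfit μ Ω p i

/-!
Let `P` be the winning price of firm `i` at `(s, ω)` and let a rival `j` quote `P - η` at its signal
`s j`. Firm `j` quotes at least `P` there, because `i` wins at `s`, and by maximality it never wins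
at that signal with a price above `P`. Hence in every realization of positive weight in which `j`
receives `s j` and wins, it already charges exactly `P`, and the cut costs it at most `η`; when it
does not win, the cut cannot hurt it. At `(s, ω)` itself `j` earned at most `P / 2`, having to share
the sale with `i`, and now earns `P - η`. The gain of order `μ s ω * P / 2` outweighs the total loss
of order `η` once `η` is small.
-/

section Realization

variable {ι : Type*} [Fintype ι] [Nonempty ι] {S : ι → Type*}
  {p q : ∀ i, S i → ℝ} {s : ∀ i, S i} {ω : ℝ} {i j : ι}

lemma mem_winners_iff :
    j ∈ winners p s ω ↔ (∀ k, p j (s j) ≤ p k (s k)) ∧ p j (s j) ≤ ω := by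
  simp only [winners, Finset.mem_filter, Finset.mem_univ, true_and]
  refine and_congr_left fun _ => ⟨fun hmin k => ?_, fun hmin => ?_⟩
  · exact hmin.trans_le (Finset.inf'_le _ (Finset.mem_univ k))
  · exact le_antisymm (Finset.le_inf' _ _ fun k _ => hmin k)
      (Finset.inf'_le (fun k => p k (s k)) (Finset.mem_univ j))

lemma price_eq_of_mem_winners (hi : i ∈ winners p s ω) (hj : j ∈ winners p s ω) :
    p j (s j) = p i (s i) :=
  le_antisymm ((mem_winners_iff.mp hj).1 i) ((mem_winners_iff.mp hi).1 j)

lemma winners_eq_singleton (hlt : ∀ k, k ≠ j → p j (s j) < p k (s k)) (hω : p j (s j) ≤ ω) :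
    winners p s ω = {j} := by
  refine Finset.eq_singleton_iff_unique_mem.mpr ⟨mem_winners_iff.mpr ⟨fun k => ?_, hω⟩, ?_⟩
  · rcases eq_or_ne k j with rfl | hk
    · exact le_rfl
    · exact (hlt k hk).le
  · intro k hk
    by_contra hkj
    exact ((mem_winners_iff.mp hk).1 j).not_gt (hlt k hkj)

lemma realizedProfit_of_mem (hj : j ∈ winners p s ω) :
    realizedProfit p s ω j = p j (s j) / (winners p s ω).card :=
  if_pos hj

lemma realizedProfit_of_notMem (hj : j ∉ winners p s ω) : realizedProfit p s ω j = 0 :=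
  if_neg hj

lemma realizedProfit_of_forall_lt (hlt : ∀ k, k ≠ j → p j (s j) < p k (s k))
    (hω : p j (s j) ≤ ω) : realizedProfit p s ω j = p j (s j) := by
  have hw := winners_eq_singleton hlt hω
  rw [realizedProfit_of_mem (hw ▸ Finset.mem_singleton_self j), hw, Finset.card_singleton,
    Nat.cast_one, div_one]

lemma realizedProfit_nonneg (hj : 0 ≤ p j (s j)) : 0 ≤ realizedProfit p s ω j :=
  ite_nonneg (div_nonneg hj (Nat.cast_nonneg _)) le_rfl

lemma realizedProfit_le_price (hj : 0 ≤ p j (s j)) : realizedProfit p s ω j ≤ p j (s j) := by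
  by_cases hw : j ∈ winners p s ω
  · rw [realizedProfit_of_mem hw]
    exact div_le_self hj (mod_cast Finset.card_pos.mpr ⟨j, hw⟩)
  · exact (realizedProfit_of_notMem hw).trans_le hj

lemma realizedProfit_le_half_of_rival_mem_winners (hji : j ≠ i) (hi : i ∈ winners p s ω)
    (hpos : 0 ≤ p i (s i)) : realizedProfit p s ω j ≤ p i (s i) / 2 := by
  by_cases hj : j ∈ winners p s ω
  · have two_le_card : (2 : ℝ) ≤ (winners p s ω).card :=
      mod_cast Finset.one_lt_card.mpr ⟨j, hj, i, hi, hji⟩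
    rw [realizedProfit_of_mem hj, price_eq_of_mem_winners hi hj]
    exact div_le_div_of_nonneg_left hpos two_pos two_le_card
  · exact (realizedProfit_of_notMem hj).trans_le (div_nonneg hpos zero_le_two)

lemma realizedProfit_congr (h : ∀ k, p k (s k) = q k (s k)) :
    realizedProfit p s ω j = realizedProfit q s ω j := by
  have hw : winners p s ω = winners q s ω := by
    ext k
    simp only [mem_winners_iff, h]
  rw [realizedProfit, realizedProfit, hw, h]

end Realization

section Requote

variable {ι : Type*} [DecidableEq ι] {S : ι → Type*}

/-- The unilateral deviation of firm `j` from `p` that quotes `c` at signal `t` and changes no other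
quote; undercutting is the case where `c` lies just below the current winning price. -/
def requote (p : ∀ i, S i → ℝ) (j : ι) [DecidableEq (S j)] (t : S j) (c : ℝ) : ∀ i, S i → ℝ :=
  Function.update p j (Function.update (p j) t c)

variable {p : ∀ i, S i → ℝ} {j : ι} [DecidableEq (S j)] {t : S j} {c : ℝ}

lemma requote_self : requote p j t c j t = c := by
  rw [requote, Function.update_self, Function.update_self]

lemma requote_of_signal_ne {t' : S j} (ht : t' ≠ t) : requote p j t c j t' = p j t' := by
  rw [requote, Function.update_self, Function.update_of_ne ht]

lemma requote_of_firm_ne {k : ι} (hk : k ≠ j) : requote p j t c k = p k :=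
  Function.update_of_ne hk _ _

variable [Fintype ι] [Nonempty ι] {s : ∀ i, S i} {ω η : ℝ}

lemma realizedProfit_requote_of_signal_ne (ht : s j ≠ t) :
    realizedProfit (requote p j t c) s ω j = realizedProfit p s ω j := by
  refine realizedProfit_congr fun k => ?_
  rcases eq_or_ne k j with rfl | hk
  · exact requote_of_signal_ne ht
  · rw [requote_of_firm_ne hk]

lemma realizedProfit_requote_of_forall_lt (hlt : ∀ k, k ≠ j → c < p k (s k)) (hω : c ≤ ω) :
    realizedProfit (requote p j (s j) c) s ω j = c := by
  have hself : requote p j (s j) c j (s j) = c := requote_self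
  refine (realizedProfit_of_forall_lt (fun k hk => ?_) (hself.trans_le hω)).trans hself
  rw [hself, requote_of_firm_ne hk]
  exact hlt k hk

lemma realizedProfit_le_requote_add (hc : 0 ≤ c) (hη : 0 ≤ η)
    (hcut : s j = t → j ∈ winners p s ω → c < p j t ∧ p j t ≤ c + η) :
    realizedProfit p s ω j ≤ realizedProfit (requote p j t c) s ω j + η := by
  by_cases ht : s j = t
  · subst ht
    by_cases hj : j ∈ winners p s ω
    · obtain ⟨hlt, hle⟩ := hcut rfl hj
      obtain ⟨hmin, hω⟩ := mem_winners_iff.mp hj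
      rw [realizedProfit_requote_of_forall_lt (fun k _ => hlt.trans_le (hmin k)) (hlt.le.trans hω)]
      exact (realizedProfit_le_price (hc.trans hlt.le)).trans hle
    · rw [realizedProfit_of_notMem hj]
      have hquote : 0 ≤ requote p j (s j) c j (s j) := hc.trans_eq requote_self.symm
      exact add_nonneg (realizedProfit_nonneg hquote) hη
  · rw [realizedProfit_requote_of_signal_ne ht]
    exact le_add_of_nonneg_right hη

end Requote

lemma sum_mul_add_le_sum_mul_of_gap {α : Type*} {A : Finset α} {w f g : α → ℝ} {a : α} {δ : ℝ}
    (hw : ∀ x ∈ A, 0 ≤ w x) (hfg : ∀ x ∈ A, 0 < w x → f x ≤ g x) (ha : a ∈ A)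
    (hgap : f a + δ ≤ g a) : ∑ x ∈ A, w x * f x + w a * δ ≤ ∑ x ∈ A, w x * g x := by
  have hterm : ∀ x ∈ A, 0 ≤ w x * (g x - f x) := fun x hx => by
    rcases (hw x hx).eq_or_lt with hzero | hpos
    · simp only [← hzero, zero_mul, le_refl]
    · exact mul_nonneg hpos.le (sub_nonneg.mpr (hfg x hx hpos))
  have hsum : w a * δ ≤ ∑ x ∈ A, w x * (g x - f x) :=
    calc w a * δ ≤ w a * (g a - f a) :=
          mul_le_mul_of_nonneg_left (le_sub_iff_add_le'.mpr hgap) (hw a ha)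
      _ ≤ ∑ x ∈ A, w x * (g x - f x) := Finset.single_le_sum hterm ha
  simp only [mul_sub, Finset.sum_sub_distrib] at hsum
  linarith

section Expectation

variable {ι : Type*} [Fintype ι] [Nonempty ι] [DecidableEq ι] {S : ι → Type*} [∀ i, Fintype (S i)]
  {Ω : Finset ℝ} {μ : (∀ i, S i) → ℝ → ℝ} {p : ∀ i, S i → ℝ} {s : ∀ i, S i} {ω : ℝ} {i j : ι}

lemma expProfit_add_le_of_gap {q : ∀ i, S i → ℝ} {η δ : ℝ}
    (hμ : ∀ s', ∀ ω' ∈ Ω, 0 ≤ μ s' ω') (hω : ω ∈ Ω)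
    (hloss : ∀ s', ∀ ω' ∈ Ω, 0 < μ s' ω' →
      realizedProfit p s' ω' j ≤ realizedProfit q s' ω' j + η)
    (hgap : realizedProfit p s ω j + δ ≤ realizedProfit q s ω j + η) :
    expProfit μ Ω p j + μ s ω * δ ≤ expProfit μ Ω q j + (∑ s', ∑ ω' ∈ Ω, μ s' ω') * η := by
  have hsum := sum_mul_add_le_sum_mul_of_gap (A := Finset.univ ×ˢ Ω) (a := (s, ω)) (δ := δ)
    (w := fun x => μ x.1 x.2) (f := fun x => realizedProfit p x.1 x.2 j)
    (g := fun x => realizedProfit q x.1 x.2 j + η)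
    (fun x hx => hμ x.1 x.2 (Finset.mem_product.mp hx).2)
    (fun x hx => hloss x.1 x.2 (Finset.mem_product.mp hx).2)
    (Finset.mk_mem_product (Finset.mem_univ s) hω) hgap
  simpa only [expProfit, Finset.sum_product, mul_add, Finset.sum_add_distrib, Finset.sum_mul]
    using hsum

lemma expProfit_add_le_expProfit_undercut [DecidableEq (S j)] {η : ℝ}
    (hμ : ∀ s', ∀ ω' ∈ Ω, 0 ≤ μ s' ω') (hω : ω ∈ Ω) (hji : j ≠ i) (hwin : i ∈ winners p s ω)
    (hmax : ∀ s', ∀ ω' ∈ Ω, 0 < μ s' ω' → s' j = s j → j ∈ winners p s' ω' →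
      p j (s j) ≤ p i (s i))
    (hη : 0 < η) (hηP : η ≤ p i (s i)) :
    expProfit μ Ω p j + μ s ω * (p i (s i) / 2) ≤
      expProfit μ Ω (requote p j (s j) (p i (s i) - η)) j + (∑ s', ∑ ω' ∈ Ω, μ s' ω') * η := by
  obtain ⟨hmin, hle⟩ := mem_winners_iff.mp hwin
  refine expProfit_add_le_of_gap hμ hω (fun s' ω' hω' hpos => ?_) ?_
  · refine realizedProfit_le_requote_add (sub_nonneg.mpr hηP) hη.le fun hsj hj => ⟨?_, ?_⟩
    · exact (sub_lt_self _ hη).trans_le (hmin j)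
    · exact (hmax s' ω' hω' hpos hsj hj).trans_eq (sub_add_cancel _ _).symm
  · rw [realizedProfit_requote_of_forall_lt (fun k _ => (sub_lt_self _ hη).trans_le (hmin k))
      ((sub_le_self _ hη.le).trans hle), sub_add_cancel, ← le_sub_iff_add_le, sub_half]
    exact realizedProfit_le_half_of_rival_mem_winners hji hwin (hη.le.trans hηP)

lemma not_isBNE_of_expProfit_lt {r : S j → ℝ}
    (h : expProfit μ Ω p j < expProfit μ Ω (Function.update p j r) j) : ¬ isBNE μ Ω p :=
  fun hBNE => (hBNE j r).not_gt h

theorem undercutting_lemma_general [DecidableEq (S j)]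
    (hμ : ∀ s', ∀ ω' ∈ Ω, 0 ≤ μ s' ω') (hω : ω ∈ Ω) (hμpos : 0 < μ s ω) (hji : j ≠ i)
    (hwin : i ∈ winners p s ω) (hpos : 0 < p i (s i))
    (hmax : ∀ s', ∀ ω' ∈ Ω, 0 < μ s' ω' → s' j = s j → j ∈ winners p s' ω' →
      p j (s j) ≤ p i (s i)) :
    (∃ η₀ : ℝ, 0 < η₀ ∧ ∀ η : ℝ, 0 < η → η < η₀ →
      expProfit μ Ω p j < expProfit μ Ω (requote p j (s j) (p i (s i) - η)) j) ∧
    ¬ isBNE μ Ω p := by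
  have total_nonneg : 0 ≤ ∑ s', ∑ ω' ∈ Ω, μ s' ω' :=
    Finset.sum_nonneg fun s' _ => Finset.sum_nonneg (hμ s')
  obtain ⟨ε, hε, total_mul_lt⟩ :=
    exists_pos_mul_lt (mul_pos hμpos (half_pos hpos)) (∑ s', ∑ ω' ∈ Ω, μ s' ω')
  have hη₀ : 0 < min (p i (s i)) ε := lt_min hpos hε
  have gain : ∀ η : ℝ, 0 < η → η < min (p i (s i)) ε →
      expProfit μ Ω p j < expProfit μ Ω (requote p j (s j) (p i (s i) - η)) j := by
    intro η hη hlt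
    obtain ⟨hηP, hηε⟩ := lt_min_iff.mp hlt
    have loss_le := mul_le_mul_of_nonneg_left hηε.le total_nonneg
    have net := expProfit_add_le_expProfit_undercut hμ hω hji hwin hmax hη hηP.le
    linarith
  exact ⟨⟨_, hη₀, gain⟩, not_isBNE_of_expProfit_lt (gain _ (half_pos hη₀) (half_lt_self hη₀))⟩

end Expectation

/-- Undercutting lemma: with `n ≥ 2` firms, if with positive probability some
firm `i` wins at a strictly positive price `p i (s i)` that is maximal among all winning
prices occurring with positive probability, then some other firm `j` can strictly increase
its expected profit by undercutting that price at its signal `s j` (for every sufficiently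
small undercutting margin `η`); in particular `p` is not a Bayesian Nash equilibrium. -/
theorem undercutting_lemma
    {ι : Type*} [Fintype ι] [Nonempty ι] [DecidableEq ι] (hn : 2 ≤ Fintype.card ι)
    {S : ι → Type*} [∀ i, Fintype (S i)] [∀ i, DecidableEq (S i)]
    (Ω : Finset ℝ) (hΩpos : ∀ ω ∈ Ω, 0 < ω)
    (μ : (∀ i, S i) → ℝ → ℝ)
    (hμ0 : ∀ s ω, 0 ≤ μ s ω)
    (hμ1 : ∑ s : ∀ i, S i, ∑ ω ∈ Ω, μ s ω = 1)
    (p : ∀ i, S i → ℝ) (i : ι) (s : ∀ i, S i) (ω : ℝ) (hωΩ : ω ∈ Ω)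
    (hμpos : 0 < μ s ω)
    (hwin : i ∈ winners p s ω)
    (hpos : 0 < p i (s i))
    (hmax : ∀ (s' : ∀ i, S i), ∀ ω' ∈ Ω, 0 < μ s' ω' →
      ∀ k ∈ winners p s' ω', p k (s' k) ≤ p i (s i)) :
    (∃ j : ι, j ≠ i ∧ ∃ η₀ : ℝ, 0 < η₀ ∧ ∀ η : ℝ, 0 < η → η < η₀ →
      expProfit μ Ω p j <
        expProfit μ Ω (Function.update p j (Function.update (p j) (s j) (p i (s i) - η))) j) ∧
    ¬ isBNE μ Ω p := by
  obtain ⟨j, hji⟩ := Fintype.exists_ne_of_one_lt_card hn i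
  obtain ⟨profitable, not_BNE⟩ := undercutting_lemma_general (fun s' ω' _ => hμ0 s' ω') hωΩ hμpos
    hji hwin hpos fun s' ω' hω' hpos' hsj hj => hsj ▸ hmax s' ω' hω' hpos' j hj
  exact ⟨⟨j, hji, profitable⟩, not_BNE⟩
end

section
/- In the Bertrand pricing game with incomplete information with exactly two firms, suppose the strategy profile p satisfies p_1(s_1) > 0 and p_2(s_2) = 0 for some signals s_1, s_2 whose joint probability under μ is strictly positive. Then firm 2 strictly increases its expected profit by changing its quote at s_2 from 0 to the strictly positive price min(p_1(s_1), min Ω)/2, leaving its other quotes unchanged; in particular, p is not a Bayesian Nash equilibrium. -/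
open Classical

/-- Realized profit of a firm quoting `a` when its (unique) rival quotes `b` and the buyer's
WTP is `ω`: it earns `a` if it strictly undercuts the rival and `a ≤ ω`, half of `a` on a
tie with `a ≤ ω`, and `0` otherwise.  This is the two-firm specialization of the winner set
`W(s,ω)` of the Bertrand pricing game with incomplete information. -/
noncomputable def pay (a b ω : ℝ) : ℝ :=
  if a < b ∧ a ≤ ω then a else if a = b ∧ a ≤ ω then a / 2 else 0

/-- Expected profit of firm 1 under the joint distribution `μ` on signal pairs and WTPs. -/
noncomputable def expProfit1 {S₁ S₂ : Type*} [Fintype S₁] [Fintype S₂]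
    (μ : S₁ → S₂ → ℝ → ℝ) (Ω : Finset ℝ) (p₁ : S₁ → ℝ) (p₂ : S₂ → ℝ) : ℝ :=
  ∑ s₁ : S₁, ∑ s₂ : S₂, ∑ ω ∈ Ω, μ s₁ s₂ ω * pay (p₁ s₁) (p₂ s₂) ω

/-- Expected profit of firm 2 under the joint distribution `μ` on signal pairs and WTPs. -/
noncomputable def expProfit2 {S₁ S₂ : Type*} [Fintype S₁] [Fintype S₂]
    (μ : S₁ → S₂ → ℝ → ℝ) (Ω : Finset ℝ) (p₁ : S₁ → ℝ) (p₂ : S₂ → ℝ) : ℝ :=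
  ∑ s₁ : S₁, ∑ s₂ : S₂, ∑ ω ∈ Ω, μ s₁ s₂ ω * pay (p₂ s₂) (p₁ s₁) ω

/-- Bayesian Nash equilibrium of the two-firm Bertrand pricing game with incomplete
information: no firm can strictly increase its expected profit by a unilateral deviation. -/
def isBNE2 {S₁ S₂ : Type*} [Fintype S₁] [Fintype S₂]
    (μ : S₁ → S₂ → ℝ → ℝ) (Ω : Finset ℝ) (p₁ : S₁ → ℝ) (p₂ : S₂ → ℝ) : Prop :=
  (∀ q₁ : S₁ → ℝ, expProfit1 μ Ω q₁ p₂ ≤ expProfit1 μ Ω p₁ p₂) ∧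
  (∀ q₂ : S₂ → ℝ, expProfit2 μ Ω p₁ q₂ ≤ expProfit2 μ Ω p₁ p₂)

/-! A nonpositive quote never earns a profit and a positive quote never makes a loss, so replacing
the former by the latter at a single signal is a weak improvement in every realization. The
improvement is strict wherever the new quote sells, which happens with positive probability if the
new quote is at most the rival's price and at most the willingness to pay. -/

theorem pay_nonneg {a : ℝ} (ha : 0 ≤ a) (b ω : ℝ) : 0 ≤ pay a b ω := by
  unfold pay
  split_ifs <;> linarith

theorem pay_nonpos {a : ℝ} (ha : a ≤ 0) (b ω : ℝ) : pay a b ω ≤ 0 := by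
  unfold pay
  split_ifs <;> linarith

theorem pay_pos {a b ω : ℝ} (ha : 0 < a) (hab : a ≤ b) (haω : a ≤ ω) : 0 < pay a b ω := by
  rcases hab.lt_or_eq with hlt | rfl
  · simpa [pay, hlt, haω] using ha
  · simpa [pay, haω] using ha

theorem pay_le_pay_update {S : Type*} [DecidableEq S] {p : S → ℝ} {s : S} {t : ℝ}
    (hp : p s ≤ 0) (ht : 0 ≤ t) (j : S) (b ω : ℝ) :
    pay (p j) b ω ≤ pay (Function.update p s t j) b ω := by
  rcases eq_or_ne j s with rfl | hj
  · rw [Function.update_self]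
    exact (pay_nonpos hp b ω).trans (pay_nonneg ht b ω)
  · rw [Function.update_of_ne hj]

section ExpectedProfit

variable {S₁ S₂ : Type*} [Fintype S₁] [Fintype S₂] {Ω : Finset ℝ} {μ : S₁ → S₂ → ℝ → ℝ}

theorem expProfit2_lt_expProfit2 (hμ : ∀ s₁ s₂, ∀ ω ∈ Ω, 0 ≤ μ s₁ s₂ ω)
    {p₁ q₁ : S₁ → ℝ} {p₂ q₂ : S₂ → ℝ}
    (hle : ∀ s₁ s₂, ∀ ω ∈ Ω, pay (p₂ s₂) (p₁ s₁) ω ≤ pay (q₂ s₂) (q₁ s₁) ω)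
    {s₁ : S₁} {s₂ : S₂} {ω : ℝ} (hω : ω ∈ Ω) (hμω : 0 < μ s₁ s₂ ω)
    (hlt : pay (p₂ s₂) (p₁ s₁) ω < pay (q₂ s₂) (q₁ s₁) ω) :
    expProfit2 μ Ω p₁ p₂ < expProfit2 μ Ω q₁ q₂ := by
  have hterm : ∀ i j, ∀ x ∈ Ω,
      μ i j x * pay (p₂ j) (p₁ i) x ≤ μ i j x * pay (q₂ j) (q₁ i) x :=
    fun i j x hx => mul_le_mul_of_nonneg_left (hle i j x hx) (hμ i j x hx)
  have hpair : ∑ x ∈ Ω, μ s₁ s₂ x * pay (p₂ s₂) (p₁ s₁) x <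
      ∑ x ∈ Ω, μ s₁ s₂ x * pay (q₂ s₂) (q₁ s₁) x :=
    Finset.sum_lt_sum (hterm s₁ s₂) ⟨ω, hω, mul_lt_mul_of_pos_left hlt hμω⟩
  have hrow : ∑ j, ∑ x ∈ Ω, μ s₁ j x * pay (p₂ j) (p₁ s₁) x <
      ∑ j, ∑ x ∈ Ω, μ s₁ j x * pay (q₂ j) (q₁ s₁) x :=
    Finset.sum_lt_sum (fun j _ => Finset.sum_le_sum (hterm s₁ j)) ⟨s₂, Finset.mem_univ _, hpair⟩
  exact Finset.sum_lt_sum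
    (fun i _ => Finset.sum_le_sum fun j _ => Finset.sum_le_sum (hterm i j))
    ⟨s₁, Finset.mem_univ _, hrow⟩

theorem two_firm_profitable_deviation_from_zero_general [DecidableEq S₂]
    (hμ : ∀ s₁ s₂, ∀ ω ∈ Ω, 0 ≤ μ s₁ s₂ ω)
    {p₁ : S₁ → ℝ} {p₂ : S₂ → ℝ} {s₁ : S₁} {s₂ : S₂} {t : ℝ}
    (h₂ : p₂ s₂ ≤ 0) (ht : 0 < t) (htp : t ≤ p₁ s₁)
    (hsale : 0 < ∑ ω ∈ Ω with t ≤ ω, μ s₁ s₂ ω) :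
    expProfit2 μ Ω p₁ p₂ < expProfit2 μ Ω p₁ (Function.update p₂ s₂ t) ∧
      ¬ isBNE2 μ Ω p₁ p₂ := by
  obtain ⟨ω, hω, hμω⟩ : ∃ ω ∈ Ω.filter (t ≤ ·), 0 < μ s₁ s₂ ω :=
    Finset.exists_lt_of_sum_lt (by simpa using hsale)
  obtain ⟨hωΩ, htω⟩ := Finset.mem_filter.mp hω
  have hgain : pay (p₂ s₂) (p₁ s₁) ω < pay (Function.update p₂ s₂ t s₂) (p₁ s₁) ω := by
    rw [Function.update_self]
    exact (pay_nonpos h₂ _ _).trans_lt (pay_pos ht htp htω)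
  have hprofit : expProfit2 μ Ω p₁ p₂ < expProfit2 μ Ω p₁ (Function.update p₂ s₂ t) :=
    expProfit2_lt_expProfit2 hμ (fun i j x _ => pay_le_pay_update h₂ ht.le j (p₁ i) x)
      hωΩ hμω hgain
  exact ⟨hprofit, fun hBNE => (hBNE.2 _).not_gt hprofit⟩

end ExpectedProfit

/-- with exactly two firms, if `p₁ s₁ > 0` and `p₂ s₂ = 0` for signals whose
joint probability is strictly positive, then firm 2 strictly gains by moving its quote at
`s₂` from `0` to `min (p₁ s₁) (min Ω) / 2`; in particular `p` is not a BNE. -/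
theorem two_firm_profitable_deviation_from_zero
    {S₁ S₂ : Type*} [Fintype S₁] [Fintype S₂] [DecidableEq S₂]
    (Ω : Finset ℝ) (hΩne : Ω.Nonempty) (hΩpos : ∀ ω ∈ Ω, 0 < ω)
    (μ : S₁ → S₂ → ℝ → ℝ)
    (hμ0 : ∀ s₁ s₂ ω, 0 ≤ μ s₁ s₂ ω)
    (hμ1 : ∑ s₁ : S₁, ∑ s₂ : S₂, ∑ ω ∈ Ω, μ s₁ s₂ ω = 1)
    (p₁ : S₁ → ℝ) (p₂ : S₂ → ℝ) (s₁ : S₁) (s₂ : S₂)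
    (h₁ : 0 < p₁ s₁) (h₂ : p₂ s₂ = 0)
    (hjoint : 0 < ∑ ω ∈ Ω, μ s₁ s₂ ω) :
    (0 < min (p₁ s₁) (Ω.min' hΩne) / 2 ∧
      expProfit2 μ Ω p₁ p₂ <
        expProfit2 μ Ω p₁ (Function.update p₂ s₂ (min (p₁ s₁) (Ω.min' hΩne) / 2))) ∧
    ¬ isBNE2 μ Ω p₁ p₂ := by
  have hmin : 0 < min (p₁ s₁) (Ω.min' hΩne) := lt_min h₁ (hΩpos _ (Ω.min'_mem hΩne))
  have hprice : min (p₁ s₁) (Ω.min' hΩne) / 2 ≤ min (p₁ s₁) (Ω.min' hΩne) := half_le_self hmin.le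
  have hsale : Ω.filter (min (p₁ s₁) (Ω.min' hΩne) / 2 ≤ ·) = Ω :=
    Finset.filter_true_of_mem fun ω hω =>
      hprice.trans ((min_le_right _ _).trans (Ω.min'_le ω hω))
  rw [and_assoc]
  exact ⟨half_pos hmin, two_firm_profitable_deviation_from_zero_general
    (fun i j ω _ => hμ0 i j ω) h₂.le (half_pos hmin) (hprice.trans (min_le_left _ _))
    (by rwa [hsale])⟩
end
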